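/- Let ι be a type of propositional variables, ⟨T_S^l, T_S^u⟩ a source pair of theories with T_B ∩ T_S^l ⊆ T_S^u, T_B a bridging theory, and V_A ⊆ ι a vocabulary. Then ⟨wsc(T_S^l;T_B;V_A), snc(T_S^u;T_B;V_A)⟩ is the tightest layered abstraction from ⟨T_S^l, T_S^u⟩ with respect to T_B over V_A: (1) T_B ∩ wsc(T_S^l;T_B;V_A) ⊆ snc(T_S^u;T_B;V_A); (2) for every theory C over V_A, T_B ∩ C ⊆ T_S^l if and only if T_B ∩ C ⊆ wsc(T_S^l;T_B;V_A); (3) for every theory D over V_A, T_B ∩ T_S^u ⊆ D if and only if T_B ∩ snc(T_S^u;T_B;V_A) ⊆ D. -/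

import Mathlib

/-!
A theory over `W` is a union of classes of worlds agreeing on `W`. Hence, among the theories over
`W`, `wsc A T W` is the largest `C` with `T ∩ C ⊆ A`, and `snc A T W` is the smallest `D` with
`T ∩ A ⊆ D`. Since every world agrees with itself, inside `T` one has
`wsc A T W ⊆ A ⊆ snc A T W`, and the inclusion of the source pair fits in the middle of this chain.
-/

def Agrees {ι : Type*} (W : Set ι) (w w' : ι → Bool) : Prop := ∀ i ∈ W, w i = w' i

def IsOver {ι : Type*} (T : Set (ι → Bool)) (W : Set ι) : Prop :=
  ∀ w w', Agrees W w w' → (w ∈ T ↔ w' ∈ T)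

def snc {ι : Type*} (A T : Set (ι → Bool)) (W : Set ι) : Set (ι → Bool) :=
  {w | ∃ w', w' ∈ T ∧ w' ∈ A ∧ Agrees W w' w}

def wsc {ι : Type*} (A T : Set (ι → Bool)) (W : Set ι) : Set (ι → Bool) :=
  {w | ∀ w', Agrees W w w' → w' ∈ T → w' ∈ A}

section Conditions

variable {ι : Type*} {A T C D : Set (ι → Bool)} {W : Set ι}

protected theorem Agrees.refl (W : Set ι) (w : ι → Bool) : Agrees W w w := fun _ _ => rfl

theorem inter_wsc_subset : T ∩ wsc A T W ⊆ A :=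
  fun w ⟨hwT, hw⟩ => hw w (.refl W w) hwT

theorem inter_subset_snc : T ∩ A ⊆ snc A T W :=
  fun w ⟨hwT, hwA⟩ => ⟨w, hwT, hwA, .refl W w⟩

theorem IsOver.subset_wsc_iff (hC : IsOver C W) : C ⊆ wsc A T W ↔ T ∩ C ⊆ A where
  mp h := (Set.inter_subset_inter_right T h).trans inter_wsc_subset
  mpr h w hwC w' hww' hw'T := h ⟨hw'T, (hC w w' hww').mp hwC⟩

theorem IsOver.snc_subset_iff (hD : IsOver D W) : snc A T W ⊆ D ↔ T ∩ A ⊆ D where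
  mp h := inter_subset_snc.trans h
  mpr := by
    rintro h w ⟨w', hw'T, hw'A, hw'w⟩
    exact (hD w' w hw'w).mp (h ⟨hw'T, hw'A⟩)

theorem IsOver.inter_subset_wsc_iff (hC : IsOver C W) :
    T ∩ C ⊆ wsc A T W ↔ T ∩ C ⊆ A where
  mp h := (Set.subset_inter Set.inter_subset_left h).trans inter_wsc_subset
  mpr h := Set.inter_subset_right.trans (hC.subset_wsc_iff.mpr h)

theorem IsOver.inter_snc_subset_iff (hD : IsOver D W) :
    T ∩ snc A T W ⊆ D ↔ T ∩ A ⊆ D where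
  mp h := (Set.subset_inter Set.inter_subset_left inter_subset_snc).trans h
  mpr h := Set.inter_subset_right.trans (hD.snc_subset_iff.mpr h)

end Conditions

theorem tightest_layered_abstraction {ι : Type*}
    (TSl TSu TB : Set (ι → Bool)) (VA : Set ι)
    (hS : TB ∩ TSl ⊆ TSu) :
    TB ∩ wsc TSl TB VA ⊆ snc TSu TB VA ∧
    (∀ C : Set (ι → Bool), IsOver C VA → (TB ∩ C ⊆ TSl ↔ TB ∩ C ⊆ wsc TSl TB VA)) ∧
    (∀ D : Set (ι → Bool), IsOver D VA → (TB ∩ TSu ⊆ D ↔ TB ∩ snc TSu TB VA ⊆ D)) := by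
  refine ⟨?_, fun C hC => hC.inter_subset_wsc_iff.symm, fun D hD => hD.inter_snc_subset_iff.symm⟩
  calc TB ∩ wsc TSl TB VA
      ⊆ TB ∩ TSl := Set.subset_inter Set.inter_subset_left inter_wsc_subset
    _ ⊆ TB ∩ TSu := Set.subset_inter Set.inter_subset_left hS
    _ ⊆ snc TSu TB VA := inter_subset_snc
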